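/- For every ε > 0 there exists K > 0 such that for all k ∈ ℂ with |k| ≥ K and all x ∈ [0,ℓ] one has |s'(x,k) − cos(kx) − (sin(kx)/k)·(1/2)∫₀ˣ q(t) dt + (cos(kx)/k²)·[ (1/4)(q(x) − q(0)) + (1/8)(∫₀ˣ q(t) dt)² ]| ≤ ε · e^{|Im k| x} / |k|². -/

import Mathlib

open MeasureTheory intervalIntegral Real

lemma gl_ofReal {g : ℝ → ℝ} {a b : ℝ} (hg : IntervalIntegrable g volume a b) :
    IntervalIntegrable (fun t => ((g t : ℝ) : ℂ)) volume a b :=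
  ⟨hg.1.ofReal, hg.2.ofReal⟩

lemma gl_dlin (k : ℂ) (x t : ℝ) :
    HasDerivAt (fun t : ℝ => k * ((2 * t - x : ℝ) : ℂ)) (2 * k) t := by
  have : HasDerivAt (fun t : ℝ => 2 * t - x) 2 t := by
    simpa using ((hasDerivAt_id t).const_mul 2).sub_const x
  exact (this.ofReal_comp.const_mul k).congr_deriv (by push_cast; ring)

lemma gl_dsin (k : ℂ) (x t : ℝ) : HasDerivAt (fun t : ℝ => Complex.sin (k * ((2 * t - x : ℝ) : ℂ)))
    (Complex.cos (k * ((2 * t - x : ℝ) : ℂ)) * (2 * k)) t :=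
  (Complex.hasDerivAt_sin _).comp t (gl_dlin k x t)

lemma gl_dcos (k : ℂ) (x t : ℝ) : HasDerivAt (fun t : ℝ => Complex.cos (k * ((2 * t - x : ℝ) : ℂ)))
    (-Complex.sin (k * ((2 * t - x : ℝ) : ℂ)) * (2 * k)) t :=
  (Complex.hasDerivAt_cos _).comp t (gl_dlin k x t)

lemma gl_exp_bd (k : ℂ) (y b : ℝ) (h : |y| ≤ b) : 
    ‖Complex.exp (k * y * Complex.I)‖ ≤ Real.exp (|k.im| * b) ∧
    ‖Complex.exp (-(k * y) * Complex.I)‖ ≤ Real.exp (|k.im| * b) := by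
  have h1 : |k.im * y| ≤ |k.im| * b := by
    rw [abs_mul]; exact mul_le_mul_of_nonneg_left h (abs_nonneg _)
  have h2 := abs_le.1 h1
  constructor <;> rw [Complex.norm_exp] <;> apply Real.exp_le_exp.2 <;> simp <;> linarith

lemma gl_nsin (k : ℂ) (y b : ℝ) (h : |y| ≤ b) :
    ‖Complex.sin (k * y)‖ ≤ Real.exp (|k.im| * b) := by
  obtain ⟨h1, h2⟩ := gl_exp_bd k y b h
  rw [Complex.sin, norm_div, norm_mul, Complex.norm_I]
  have := norm_sub_le (Complex.exp (-(k * y) * Complex.I)) (Complex.exp (k * y * Complex.I))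
  simp only [Complex.norm_ofNat]
  linarith

lemma gl_ncos (k : ℂ) (y b : ℝ) (h : |y| ≤ b) :
    ‖Complex.cos (k * y)‖ ≤ Real.exp (|k.im| * b) := by
  obtain ⟨h1, h2⟩ := gl_exp_bd k y b h
  rw [Complex.cos, norm_div]
  have := norm_add_le (Complex.exp (k * y * Complex.I)) (Complex.exp (-(k * y) * Complex.I))
  simp only [Complex.norm_ofNat]
  linarith

lemma gl_ibound {ℓ x M : ℝ} (hx : x ∈ Set.Icc 0 ℓ) (hM : 0 ≤ M) {g : ℝ → ℝ} {f : ℝ → ℂ}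
    (hg : IntervalIntegrable g volume 0 ℓ)
    (h : ∀ t ∈ Set.Icc 0 x, ‖f t‖ ≤ M * |g t|) :
    ‖∫ t in (0:ℝ)..x, f t‖ ≤ M * ∫ t in (0:ℝ)..ℓ, |g t| := by
  have hgx : IntervalIntegrable g volume 0 x := hg.mono_set (by
    rw [Set.uIcc_of_le hx.1, Set.uIcc_of_le (hx.1.trans hx.2)]
    exact Set.Icc_subset_Icc_right hx.2)
  calc ‖∫ t in (0:ℝ)..x, f t‖ ≤ ∫ t in (0:ℝ)..x, M * |g t| := by
        apply intervalIntegral.norm_integral_le_of_norm_le hx.1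
        · exact Filter.Eventually.of_forall fun t ht => h t ⟨ht.1.le, ht.2⟩
        · exact hgx.abs.const_mul M
    _ = M * ∫ t in (0:ℝ)..x, |g t| := by rw [intervalIntegral.integral_const_mul]
    _ ≤ _ := by
        apply mul_le_mul_of_nonneg_left _ hM
        apply intervalIntegral.integral_mono_interval le_rfl hx.1 hx.2
        · exact Filter.Eventually.of_forall fun t => abs_nonneg _
        · exact hg.abs

lemma gl_approx {ℓ : ℝ} (hℓ : 0 < ℓ) {g : ℝ → ℝ} (hg : IntervalIntegrable g volume 0 ℓ)
    {δ : ℝ} (hδ : 0 < δ) : ∃ p : Polynomial ℝ, ∫ t in (0:ℝ)..ℓ, |g t - p.eval t| ≤ δ := by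
  have hi : Integrable g (volume.restrict (Set.Ioc 0 ℓ)) := hg.1
  obtain ⟨f, -, hf, hfc, hfi⟩ := hi.exists_hasCompactSupport_integral_sub_le (half_pos hδ)
  obtain ⟨p, hp⟩ := exists_polynomial_near_of_continuousOn 0 ℓ f hfc.continuousOn
    (δ / 2 / ℓ) (by positivity)
  refine ⟨p, ?_⟩
  have h1 : IntervalIntegrable (fun t => |g t - f t|) volume 0 ℓ :=
    (hg.sub (hfc.intervalIntegrable 0 ℓ)).abs
  have hpi : IntervalIntegrable (fun t => p.eval t) volume 0 ℓ :=
    p.continuous.intervalIntegrable 0 ℓ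
  calc ∫ t in (0:ℝ)..ℓ, |g t - p.eval t| ≤ ∫ t in (0:ℝ)..ℓ, (|g t - f t| + δ / 2 / ℓ) := by
        apply intervalIntegral.integral_mono_on hℓ.le
        · exact (hg.sub hpi).abs
        · exact h1.add intervalIntegrable_const
        · intro t ht
          have := hp t ht
          rw [abs_sub_comm] at this
          have h3 := abs_sub_le (g t) (f t) (p.eval t)
          linarith
    _ = (∫ t in (0:ℝ)..ℓ, |g t - f t|) + δ / 2 := by
        rw [intervalIntegral.integral_add h1 intervalIntegrable_const]
        simp; field_simp
    _ ≤ δ := by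
        rw [intervalIntegral.integral_of_le hℓ.le]
        simp only [Real.norm_eq_abs] at hf
        linarith

lemma gl_parts_poly {x : ℝ} {v v' : ℝ → ℂ} (hv : ∀ t, HasDerivAt v (v' t) t)
    (hv' : Continuous v') (P : Polynomial ℝ) :
    ∫ t in (0:ℝ)..x, v' t * (P.eval t : ℝ) = v x * (P.eval x : ℝ) - v 0 * (P.eval 0 : ℝ)
      - ∫ t in (0:ℝ)..x, v t * (P.derivative.eval t : ℝ) := by
  have hvc : Continuous v := continuous_iff_continuousAt.2 fun t => (hv t).continuousAt
  have := intervalIntegral.integral_mul_deriv_eq_deriv_mul (a := 0) (b := x)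
    (u := fun t : ℝ => ((P.eval t : ℝ) : ℂ)) (u' := fun t : ℝ => ((P.derivative.eval t : ℝ) : ℂ))
    (v := v) (v' := v')
    (fun t _ => (P.hasDerivAt t).ofReal_comp) (fun t _ => hv t)
    ((Complex.continuous_ofReal.comp P.derivative.continuous).intervalIntegrable _ _)
    (hv'.intervalIntegrable _ _)
  simp only [mul_comm (v' _), mul_comm (v _)] 
  exact this

lemma gl_parts {ℓ x : ℝ} (hℓ : 0 < ℓ) (hx : x ∈ Set.Icc 0 ℓ) {v v' : ℝ → ℂ}
    (hv : ∀ t, HasDerivAt v (v' t) t) (hv' : Continuous v') {q q' : ℝ → ℝ} (hqc : Continuous q)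
    (hq' : IntervalIntegrable q' volume 0 ℓ)
    (hq : ∀ x ∈ Set.Icc (0 : ℝ) ℓ, q x = q 0 + ∫ t in (0 : ℝ)..x, q' t) :
    ∫ t in (0:ℝ)..x, v' t * (q t : ℝ) = v x * (q x : ℝ) - v 0 * (q 0 : ℝ)
      - ∫ t in (0:ℝ)..x, v t * (q' t : ℝ) := by
  have hvc : Continuous v := continuous_iff_continuousAt.2 fun t => (hv t).continuousAt
  obtain ⟨M, hM⟩ := isCompact_Icc.exists_bound_of_continuousOn (s := Set.Icc 0 ℓ) hvc.continuousOn
  obtain ⟨M', hM'⟩ := isCompact_Icc.exists_bound_of_continuousOn (s := Set.Icc 0 ℓ) hv'.continuousOn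
  have hM0 : 0 ≤ M := (norm_nonneg _).trans (hM x hx)
  have hM0' : 0 ≤ M' := (norm_nonneg _).trans (hM' x hx)
  have h00 : (0:ℝ) ∈ Set.Icc 0 ℓ := ⟨le_rfl, hℓ.le⟩
  have hq'x : IntervalIntegrable q' volume 0 x := hq'.mono_set (by
    rw [Set.uIcc_of_le hx.1, Set.uIcc_of_le (hx.1.trans hx.2)]
    exact Set.Icc_subset_Icc_right hx.2)
  rw [← sub_eq_zero, ← norm_le_zero_iff]
  apply le_of_forall_pos_le_add
  intro η hη
  set C := M' * ℓ + M + M with hC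
  have hC0 : 0 ≤ C := by positivity
  have hδ : 0 < η / (C + 1) := by positivity
  obtain ⟨p, hp⟩ := gl_approx hℓ hq' hδ
  set δ := η / (C + 1) with hδd
  -- antiderivative
  obtain ⟨P0, hP0⟩ : ∃ P : Polynomial ℝ, P.derivative = p := by
    refine ⟨p.sum fun n a => Polynomial.monomial (n+1) (a / (n+1)), ?_⟩
    rw [Polynomial.sum, Polynomial.derivative_sum]
    conv_rhs => rw [p.as_sum_support]
    apply Finset.sum_congr rfl
    intro n _
    rw [Polynomial.derivative_monomial]
    congr 1
    push_cast
    field_simp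
  set P : Polynomial ℝ := P0 - Polynomial.C (P0.eval 0) + Polynomial.C (q 0) with hP
  have hPd : P.derivative = p := by simp [hP, hP0]
  have hPz : P.eval 0 = q 0 := by simp [hP]
  have hPi : ∀ t, P.eval t = q 0 + ∫ r in (0:ℝ)..t, p.eval r := by
    intro t
    rw [intervalIntegral.integral_eq_sub_of_hasDerivAt (f := fun r => P.eval r)
      (fun r _ => by have := P.hasDerivAt r; rwa [hPd] at this)
      (p.continuous.intervalIntegrable _ _), hPz]
    ring
  have hdi : IntervalIntegrable (fun t => q' t - p.eval t) volume 0 ℓ :=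
    hq'.sub (p.continuous.intervalIntegrable _ _)
  have hqP : ∀ t ∈ Set.Icc 0 ℓ, |q t - P.eval t| ≤ δ := by
    intro t ht
    have hq't : IntervalIntegrable q' volume 0 t := hq'.mono_set (by
      rw [Set.uIcc_of_le ht.1, Set.uIcc_of_le (ht.1.trans ht.2)]
      exact Set.Icc_subset_Icc_right ht.2)
    have h1 := gl_ibound (f := fun t => ((q' t - p.eval t : ℝ) : ℂ)) ht zero_le_one hdi
      (fun t _ => by rw [Complex.norm_real, one_mul, Real.norm_eq_abs])
    rw [intervalIntegral.integral_ofReal, Complex.norm_real, Real.norm_eq_abs,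
      intervalIntegral.integral_sub hq't (p.continuous.intervalIntegrable _ _)] at h1
    rw [hq t ht, hPi t, add_sub_add_left_eq_sub]
    linarith
  have hpp := gl_parts_poly (x := x) hv hv' P
  rw [hPd, hPz] at hpp
  have e1 : (∫ t in (0:ℝ)..x, v' t * (q t : ℝ)) - (∫ t in (0:ℝ)..x, v' t * (P.eval t : ℝ))
      = ∫ t in (0:ℝ)..x, v' t * ((q t - P.eval t : ℝ) : ℂ) := by
    rw [← intervalIntegral.integral_sub]
    · congr 1; ext t; push_cast; ring
    · exact Continuous.intervalIntegrable (by fun_prop) _ _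
    · exact Continuous.intervalIntegrable (by fun_prop) _ _
  have e2 : (∫ t in (0:ℝ)..x, v t * (q' t : ℝ)) - (∫ t in (0:ℝ)..x, v t * (p.eval t : ℝ))
      = ∫ t in (0:ℝ)..x, v t * ((q' t - p.eval t : ℝ) : ℂ) := by
    rw [← intervalIntegral.integral_sub]
    · congr 1; ext t; push_cast; ring
    · exact IntervalIntegrable.continuousOn_mul (f := fun t => ((q' t : ℝ) : ℂ)) (g := v)
        (gl_ofReal hq'x) hvc.continuousOn
    · exact Continuous.intervalIntegrable (by fun_prop) _ _
  have b1 : ‖∫ t in (0:ℝ)..x, v' t * ((q t - P.eval t : ℝ) : ℂ)‖ ≤ (M' * δ) * ℓ := by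
    have := gl_ibound (f := fun t => v' t * ((q t - P.eval t : ℝ) : ℂ)) (g := fun _ => 1)
      (M := M' * δ) hx (by positivity) intervalIntegrable_const (fun t ht => by
        have ht' : t ∈ Set.Icc 0 ℓ := ⟨ht.1, ht.2.trans hx.2⟩
        rw [norm_mul, Complex.norm_real, Real.norm_eq_abs, abs_one, mul_one]
        exact mul_le_mul (hM' t ht') (hqP t ht') (abs_nonneg _) hM0')
    simpa using this
  have b2 : ‖∫ t in (0:ℝ)..x, v t * ((q' t - p.eval t : ℝ) : ℂ)‖ ≤ M * δ := by
    have := gl_ibound (f := fun t => v t * ((q' t - p.eval t : ℝ) : ℂ))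
      hx hM0 hdi (fun t ht => by
        have ht' : t ∈ Set.Icc 0 ℓ := ⟨ht.1, ht.2.trans hx.2⟩
        rw [norm_mul, Complex.norm_real, Real.norm_eq_abs]
        exact mul_le_mul_of_nonneg_right (hM t ht') (abs_nonneg _))
    exact this.trans (mul_le_mul_of_nonneg_left hp hM0)
  have b3 : ‖v x * ((q x - P.eval x : ℝ) : ℂ)‖ ≤ M * δ := by
    rw [norm_mul, Complex.norm_real, Real.norm_eq_abs]
    exact mul_le_mul (hM x hx) (hqP x hx) (abs_nonneg _) hM0
  have key : (∫ t in (0:ℝ)..x, v' t * (q t : ℝ)) - (v x * (q x : ℝ) - v 0 * (q 0 : ℝ)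
      - ∫ t in (0:ℝ)..x, v t * (q' t : ℝ)) =
      (∫ t in (0:ℝ)..x, v' t * ((q t - P.eval t : ℝ) : ℂ)) - v x * ((q x - P.eval x : ℝ) : ℂ)
      + ∫ t in (0:ℝ)..x, v t * ((q' t - p.eval t : ℝ) : ℂ) := by
    rw [← e1, ← e2, hpp]; push_cast; ring
  rw [key]
  have hfin : C * δ ≤ η := by
    rw [hδd, mul_div_assoc', div_le_iff₀ (by positivity)]
    nlinarith
  calc _ ≤ _ := norm_add_le _ _
    _ ≤ _ := add_le_add_left (norm_sub_le _ _) _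
    _ ≤ (M' * δ) * ℓ + M * δ + M * δ := by linarith
    _ ≤ 0 + η := by rw [hC] at hfin; linarith

lemma gl_abs1 {t x : ℝ} (ht : t ∈ Set.Icc 0 x) : |2 * t - x| ≤ x := by
  rw [abs_le]; constructor <;> linarith [ht.1, ht.2]

lemma gl_RL {ℓ : ℝ} (hℓ : 0 < ℓ) {g : ℝ → ℝ} (hg : IntervalIntegrable g volume 0 ℓ)
    {ε : ℝ} (hε : 0 < ε) : ∃ K > 0, ∀ k : ℂ, K ≤ ‖k‖ → ∀ x ∈ Set.Icc (0 : ℝ) ℓ,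
      ‖∫ t in (0:ℝ)..x, Complex.cos (k * ((2 * t - x : ℝ) : ℂ)) * (g t : ℂ)‖
        ≤ ε * Real.exp (|k.im| * x) := by
  obtain ⟨p, hp⟩ := gl_approx hℓ hg (half_pos hε)
  obtain ⟨M, hM⟩ := isCompact_Icc.exists_bound_of_continuousOn (s := Set.Icc 0 ℓ)
    p.continuous.continuousOn
  have h00 : (0:ℝ) ∈ Set.Icc 0 ℓ := ⟨le_rfl, hℓ.le⟩
  have hM0 : 0 ≤ M := (norm_nonneg _).trans (hM 0 h00)
  set B := ∫ t in (0:ℝ)..ℓ, |p.derivative.eval t| with hB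
  have hB0 : 0 ≤ B := intervalIntegral.integral_nonneg hℓ.le fun _ _ => abs_nonneg _
  refine ⟨(2 * M + B + 1) / ε, by positivity, fun k hk x hx => ?_⟩
  have hk0 : 0 < ‖k‖ := lt_of_lt_of_le (by positivity) hk
  have hkne : k ≠ 0 := norm_pos_iff.1 hk0
  set E := Real.exp (|k.im| * x) with hE
  have hE0 : 0 < E := Real.exp_pos _
  have hgx : IntervalIntegrable g volume 0 x := hg.mono_set (by
    rw [Set.uIcc_of_le hx.1, Set.uIcc_of_le (hx.1.trans hx.2)]
    exact Set.Icc_subset_Icc_right hx.2)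
  have hdi : IntervalIntegrable (fun t => g t - p.eval t) volume 0 ℓ :=
    hg.sub (p.continuous.intervalIntegrable _ _)
  have e2 : (∫ t in (0:ℝ)..x, Complex.cos (k * ((2 * t - x : ℝ) : ℂ)) * (g t : ℂ)) =
      (∫ t in (0:ℝ)..x, Complex.cos (k * ((2 * t - x : ℝ) : ℂ)) * ((g t - p.eval t : ℝ) : ℂ))
      + ∫ t in (0:ℝ)..x, Complex.cos (k * ((2 * t - x : ℝ) : ℂ)) * ((p.eval t : ℝ) : ℂ) := by
    rw [← intervalIntegral.integral_add]
    · congr 1; ext t; push_cast; ring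
    · exact IntervalIntegrable.continuousOn_mul (f := fun t => ((g t - p.eval t : ℝ) : ℂ))
        (g := fun t : ℝ => Complex.cos (k * ((2 * t - x : ℝ) : ℂ)))
        (gl_ofReal (hgx.sub (p.continuous.intervalIntegrable _ _)))
        (Continuous.continuousOn (by fun_prop))
    · exact Continuous.intervalIntegrable (by fun_prop) _ _
  have b1 : ‖∫ t in (0:ℝ)..x, Complex.cos (k * ((2 * t - x : ℝ) : ℂ)) *
      ((g t - p.eval t : ℝ) : ℂ)‖ ≤ E * (ε / 2) := by
    have := gl_ibound (f := fun t : ℝ => Complex.cos (k * ((2 * t - x : ℝ) : ℂ)) *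
      ((g t - p.eval t : ℝ) : ℂ)) hx hE0.le hdi (fun t ht => by
        rw [norm_mul, Complex.norm_real, Real.norm_eq_abs]
        exact mul_le_mul_of_nonneg_right (gl_ncos _ _ _ (gl_abs1 ht)) (abs_nonneg _))
    exact this.trans (mul_le_mul_of_nonneg_left hp hE0.le)
  have hpp := gl_parts_poly (x := x) (v := fun t : ℝ => Complex.sin (k * ((2 * t - x : ℝ) : ℂ)) / (2 * k))
    (v' := fun t : ℝ => Complex.cos (k * ((2 * t - x : ℝ) : ℂ))) (fun t => by
      exact ((gl_dsin k x t).div_const (2 * k)).congr_deriv (by field_simp)) (by fun_prop) p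
  have hn : ∀ t ∈ Set.Icc 0 x, ‖Complex.sin (k * ((2 * t - x : ℝ) : ℂ)) / (2 * k)‖ ≤ E / (2 * ‖k‖) := by
    intro t ht
    rw [norm_div, norm_mul, Complex.norm_ofNat]
    exact div_le_div_of_nonneg_right (gl_nsin _ _ _ (gl_abs1 ht)) (by positivity)
  have b2 : ‖∫ t in (0:ℝ)..x, Complex.cos (k * ((2 * t - x : ℝ) : ℂ)) * ((p.eval t : ℝ) : ℂ)‖
      ≤ E / (2 * ‖k‖) * M + E / (2 * ‖k‖) * M + E / (2 * ‖k‖) * B := by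
    rw [hpp]
    refine (norm_sub_le _ _).trans (add_le_add ((norm_sub_le _ _).trans (add_le_add ?_ ?_)) ?_)
    · rw [norm_mul, Complex.norm_real]
      exact mul_le_mul (hn x ⟨hx.1, le_rfl⟩) (hM x hx) (norm_nonneg _) (by positivity)
    · rw [norm_mul, Complex.norm_real]
      exact mul_le_mul (hn 0 ⟨le_rfl, hx.1⟩) (hM 0 h00) (norm_nonneg _) (by positivity)
    · apply gl_ibound hx (by positivity) (p.derivative.continuous.intervalIntegrable _ _)
      intro t ht
      rw [norm_mul, Complex.norm_real, Real.norm_eq_abs]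
      exact mul_le_mul_of_nonneg_right (hn t ht) (abs_nonneg _)
  have b3 : E / (2 * ‖k‖) * M + E / (2 * ‖k‖) * M + E / (2 * ‖k‖) * B ≤ E * (ε / 2) := by
    rw [div_le_iff₀ hε] at hk
    have : E / (2 * ‖k‖) * M + E / (2 * ‖k‖) * M + E / (2 * ‖k‖) * B
      = E * (2 * M + B) / (2 * ‖k‖) := by field_simp; ring
    rw [this, div_le_iff₀ (by positivity)]
    have : E * (2 * M + B) ≤ E * (‖k‖ * ε) := mul_le_mul_of_nonneg_left (by linarith) hE0.le
    linarith
  rw [e2]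
  refine (norm_add_le _ _).trans ?_
  linarith

lemma gl_trig (k : ℂ) (x t : ℝ) :
    Complex.sin (k * ((x - t : ℝ) : ℂ)) * Complex.sin (k * t) =
      (Complex.cos (k * ((2 * t - x : ℝ) : ℂ)) - Complex.cos (k * x)) / 2 ∧
    Complex.cos (k * ((x - t : ℝ) : ℂ)) * Complex.sin (k * t) =
      (Complex.sin (k * ((2 * t - x : ℝ) : ℂ)) + Complex.sin (k * x)) / 2 ∧
    Complex.cos (k * ((x - t : ℝ) : ℂ)) * Complex.cos (k * t) =
      (Complex.cos (k * ((2 * t - x : ℝ) : ℂ)) + Complex.cos (k * x)) / 2 := by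
  have e1 : k * ((2 * t - x : ℝ) : ℂ) = k * t - k * ((x - t : ℝ) : ℂ) := by push_cast; ring
  have e2 : k * (x : ℂ) = k * t + k * ((x - t : ℝ) : ℂ) := by push_cast; ring
  rw [e1, e2]
  generalize k * ((x - t : ℝ) : ℂ) = a
  generalize k * (t : ℂ) = b
  rw [Complex.cos_add, Complex.cos_sub, Complex.sin_add, Complex.sin_sub]
  refine ⟨by ring, by ring, by ring⟩

lemma gl_conv {ℓ x c m : ℝ} (κ : ℝ) (hx : x ∈ Set.Icc 0 ℓ) (hc : 0 ≤ c) (hm : 0 ≤ m)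
    {q : ℝ → ℝ} (hq : Continuous q) {φ w : ℝ → ℂ}
    (hφ : ∀ t ∈ Set.Icc 0 x, ‖φ t‖ ≤ c * Real.exp (κ * (x - t)))
    (hw : ∀ t ∈ Set.Icc 0 ℓ, ‖w t‖ ≤ m * Real.exp (κ * t)) :
    ‖∫ t in (0:ℝ)..x, φ t * (q t : ℂ) * w t‖ ≤
      c * m * Real.exp (κ * x) * ∫ t in (0:ℝ)..ℓ, |q t| := by
  apply gl_ibound hx (by positivity) (hq.intervalIntegrable _ _)
  intro t ht
  have ht' : t ∈ Set.Icc 0 ℓ := ⟨ht.1, ht.2.trans hx.2⟩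
  have he : Real.exp (κ * x) = Real.exp (κ * (x - t)) * Real.exp (κ * t) := by
    rw [← Real.exp_add]; congr 1; ring
  rw [norm_mul, norm_mul, Complex.norm_real, Real.norm_eq_abs, he]
  calc ‖φ t‖ * |q t| * ‖w t‖ ≤ (c * Real.exp (κ * (x - t))) * |q t| * (m * Real.exp (κ * t)) := by
        apply mul_le_mul _ (hw t ht') (norm_nonneg _) (by positivity)
        exact mul_le_mul_of_nonneg_right (hφ t ht) (abs_nonneg _)
    _ = _ := by ring

lemma gl_nsin' {k : ℂ} {x t : ℝ} (ht : t ∈ Set.Icc 0 x) :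
    ‖Complex.sin (k * ((x - t : ℝ) : ℂ)) / k‖ ≤ 1 / ‖k‖ * Real.exp (|k.im| * (x - t)) := by
  have := gl_nsin k (x - t) (x - t) (by rw [abs_of_nonneg]; linarith [ht.2])
  rw [norm_div, div_mul_eq_mul_div, one_mul]
  exact div_le_div_of_nonneg_right this (norm_nonneg _)

lemma gl_ncos' {k : ℂ} {x t : ℝ} (ht : t ∈ Set.Icc 0 x) :
    ‖Complex.cos (k * ((x - t : ℝ) : ℂ))‖ ≤ 1 * Real.exp (|k.im| * (x - t)) := by
  rw [one_mul]
  exact gl_ncos k (x - t) (x - t) (by rw [abs_of_nonneg]; linarith [ht.2])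

lemma gl_core {ℓ : ℝ} (hℓ : 0 < ℓ) {q q' : ℝ → ℝ} (hqc : Continuous q)
    (hq' : IntervalIntegrable q' volume 0 ℓ)
    (hq : ∀ x ∈ Set.Icc (0 : ℝ) ℓ, q x = q 0 + ∫ t in (0 : ℝ)..x, q' t)
    {k : ℂ} (hk : 0 < ‖k‖) {S : ℝ → ℂ} (hSc : Continuous S)
    (hS : ∀ x ∈ Set.Icc (0 : ℝ) ℓ, S x = Complex.sin (k * x) / k +
        ∫ t in (0 : ℝ)..x, (Complex.sin (k * ((x - t : ℝ) : ℂ)) / k) * (q t : ℂ) * S t)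
    {A : ℝ} (hA : A = ∫ t in (0:ℝ)..ℓ, |q t|) (hAk : 2 * A ≤ ‖k‖)
    {Q : ℝ → ℝ} (hQ : ∀ x, Q x = ∫ t in (0:ℝ)..x, q t) {ε : ℝ} (hε : 0 < ε)
    (h1 : ∀ x ∈ Set.Icc (0 : ℝ) ℓ,
      ‖∫ t in (0:ℝ)..x, Complex.cos (k * ((2 * t - x : ℝ) : ℂ)) * (q' t : ℂ)‖
        ≤ ε * Real.exp (|k.im| * x))
    (h2 : ∀ x ∈ Set.Icc (0 : ℝ) ℓ,
      ‖∫ t in (0:ℝ)..x, Complex.cos (k * ((2 * t - x : ℝ) : ℂ)) * (q t : ℂ)‖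
        ≤ ε * Real.exp (|k.im| * x))
    (h3 : ∀ x ∈ Set.Icc (0 : ℝ) ℓ,
      ‖∫ t in (0:ℝ)..x, Complex.cos (k * ((2 * t - x : ℝ) : ℂ)) * ((q t * Q t : ℝ) : ℂ)‖
        ≤ ε * Real.exp (|k.im| * x)) :
    ∀ x ∈ Set.Icc (0 : ℝ) ℓ,
      ‖(∫ t in (0 : ℝ)..x, Complex.cos (k * ((x - t : ℝ) : ℂ)) * (q t : ℂ) * S t)
        - (Complex.sin (k * x) / k) * ((1 / 2 : ℂ) * (Q x : ℂ))
          + (Complex.cos (k * x) / k ^ 2) *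
              ((1 / 4 : ℂ) * ((q x : ℂ) - (q 0 : ℂ)) + (1 / 8 : ℂ) * (Q x : ℂ) ^ 2)‖
        ≤ (ε / 2 + A * (2 * A ^ 2 / ‖k‖ + ε / 2)) * Real.exp (|k.im| * x) / ‖k‖ ^ 2 := by
  have hkne : k ≠ 0 := norm_pos_iff.1 hk
  have hA0 : 0 ≤ A := by
    rw [hA]; exact intervalIntegral.integral_nonneg hℓ.le fun _ _ => abs_nonneg _
  have hQd : ∀ t, HasDerivAt Q (q t) t := by
    intro t
    have : Q = fun x => ∫ t in (0:ℝ)..x, q t := funext hQ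
    rw [this]
    exact intervalIntegral.integral_hasDerivAt_right (hqc.intervalIntegrable _ _)
      hqc.aestronglyMeasurable.stronglyMeasurableAtFilter hqc.continuousAt
  have hQc : Continuous Q := continuous_iff_continuousAt.2 fun t => (hQd t).continuousAt
  have hQ0 : Q 0 = 0 := by rw [hQ]; simp
  have hQC : ∀ x, (∫ t in (0:ℝ)..x, (q t : ℂ)) = (Q x : ℂ) := by
    intro x; rw [hQ, intervalIntegral.integral_ofReal]
  -- bound of S
  obtain ⟨m, hm0, hm⟩ : ∃ m, 0 ≤ m ∧ (m ≤ 2 / ‖k‖ ∧ 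
      ∀ t ∈ Set.Icc 0 ℓ, ‖S t‖ ≤ m * Real.exp (|k.im| * t)) := by
    obtain ⟨x0, hx0, hmax⟩ := isCompact_Icc.exists_isMaxOn (s := Set.Icc 0 ℓ)
      ⟨0, le_rfl, hℓ.le⟩ (f := fun t => ‖S t‖ * Real.exp (-(|k.im| * t)))
      (Continuous.continuousOn (by fun_prop))
    set m := ‖S x0‖ * Real.exp (-(|k.im| * x0)) with hmd
    have hb : ∀ t ∈ Set.Icc 0 ℓ, ‖S t‖ ≤ m * Real.exp (|k.im| * t) := by
      intro t ht
      have := hmax ht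
      simp only [Set.mem_setOf_eq, Real.exp_neg] at this
      rw [← div_eq_mul_inv, div_le_iff₀ (Real.exp_pos _)] at this
      rw [hmd, Real.exp_neg]
      exact this
    have hm0 : 0 ≤ m := by positivity
    refine ⟨m, hm0, ?_, hb⟩
    have hc := gl_conv (c := 1 / ‖k‖) |k.im| hx0 (by positivity) hm0 hqc
      (fun t ht => gl_nsin' (k := k) ht) hb
    rw [← hA] at hc
    have hs0 : ‖Complex.sin (k * x0) / k‖ ≤ 1 / ‖k‖ * Real.exp (|k.im| * x0) := by
      have := gl_nsin' (k := k) (x := x0) (t := 0) ⟨le_rfl, hx0.1⟩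
      simpa using this
    have hn : ‖S x0‖ ≤ 1 / ‖k‖ * Real.exp (|k.im| * x0) +
        1 / ‖k‖ * m * Real.exp (|k.im| * x0) * A := by
      rw [hS x0 hx0]
      exact (norm_add_le _ _).trans (add_le_add hs0 hc)
    have : ‖S x0‖ = m * Real.exp (|k.im| * x0) := by
      rw [hmd, mul_assoc, ← Real.exp_add]; simp
    rw [this] at hn
    have hn2 : m ≤ 1 / ‖k‖ + 1 / ‖k‖ * m * A := by
      have : m * Real.exp (|k.im| * x0) ≤ (1 / ‖k‖ + 1 / ‖k‖ * m * A) * Real.exp (|k.im| * x0) := by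
        linarith
      exact le_of_mul_le_mul_right this (Real.exp_pos _)
    have hn3 : m * ‖k‖ ≤ 1 + m * A := by
      have : 1 / ‖k‖ + 1 / ‖k‖ * m * A = (1 + m * A) / ‖k‖ := by field_simp
      rwa [this, le_div_iff₀ hk] at hn2
    rw [le_div_iff₀ hk]
    have := mul_le_mul_of_nonneg_left hAk hm0
    linarith
  obtain ⟨hm2, hSb⟩ := hm
  -- first remainder
  set s0 : ℝ → ℂ := fun t => Complex.sin (k * t) / k with hs0
  have hs0c : Continuous s0 := by rw [hs0]; fun_prop
  have hr1 : ∀ t ∈ Set.Icc 0 ℓ, ‖S t - s0 t‖ ≤ (2 * A / ‖k‖ ^ 2) * Real.exp (|k.im| * t) := by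
    intro t ht
    have hc := gl_conv (c := 1 / ‖k‖) |k.im| ht (by positivity) hm0 hqc
      (fun t ht => gl_nsin' (k := k) ht) hSb
    rw [hS t ht, hs0, add_sub_cancel_left]
    refine hc.trans ?_
    rw [← hA]
    have : 1 / ‖k‖ * m * A ≤ 1 / ‖k‖ * (2 / ‖k‖) * A := by gcongr
    have h4 : 1 / ‖k‖ * (2 / ‖k‖) * A = 2 * A / ‖k‖ ^ 2 := by field_simp
    have := mul_le_mul_of_nonneg_right (this.trans_eq h4) (Real.exp_pos (|k.im| * t)).le
    linarith
  -- s1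
  have hs1 : ∀ x, ∫ t in (0:ℝ)..x, (Complex.sin (k * ((x - t : ℝ) : ℂ)) / k) * (q t : ℂ) * s0 t =
      (1 / (2 * k ^ 2)) * (∫ t in (0:ℝ)..x, Complex.cos (k * ((2 * t - x : ℝ) : ℂ)) * (q t : ℂ))
      - Complex.cos (k * x) / (2 * k ^ 2) * Q x := by
    intro x
    rw [← hQC, ← intervalIntegral.integral_const_mul, ← intervalIntegral.integral_const_mul,
      ← intervalIntegral.integral_sub]
    · congr 1; ext t
      have := (gl_trig k x t).1
      calc _ = (Complex.sin (k * ((x - t : ℝ) : ℂ)) * Complex.sin (k * t)) * q t / k ^ 2 := by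
            simp only [hs0]; field_simp
        _ = _ := by rw [this]; field_simp
    · exact Continuous.intervalIntegrable (by fun_prop) _ _
    · exact Continuous.intervalIntegrable (by fun_prop) _ _
  set w : ℝ → ℂ := fun t => S t - s0 t + Complex.cos (k * t) / (2 * k ^ 2) * Q t with hw
  have hwc : Continuous w := by rw [hw]; fun_prop
  set η := (2 * A ^ 2 / ‖k‖ + ε / 2) / ‖k‖ ^ 2 with hη
  have hη0 : 0 ≤ η := by positivity
  have hwb : ∀ x ∈ Set.Icc 0 ℓ, ‖w x‖ ≤ η * Real.exp (|k.im| * x) := by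
    intro x hx
    have e : w x = (∫ t in (0:ℝ)..x, (Complex.sin (k * ((x - t : ℝ) : ℂ)) / k) * (q t : ℂ) *
        (S t - s0 t)) + (1 / (2 * k ^ 2)) *
        (∫ t in (0:ℝ)..x, Complex.cos (k * ((2 * t - x : ℝ) : ℂ)) * (q t : ℂ)) := by
      have e1 : (∫ t in (0:ℝ)..x, (Complex.sin (k * ((x - t : ℝ) : ℂ)) / k) * (q t : ℂ) *
        (S t - s0 t)) = (∫ t in (0:ℝ)..x, (Complex.sin (k * ((x - t : ℝ) : ℂ)) / k) * (q t : ℂ) *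
        S t) - ∫ t in (0:ℝ)..x, (Complex.sin (k * ((x - t : ℝ) : ℂ)) / k) * (q t : ℂ) * s0 t := by
        rw [← intervalIntegral.integral_sub]
        · congr 1; ext t; ring
        · exact Continuous.intervalIntegrable (by fun_prop) _ _
        · exact Continuous.intervalIntegrable (by fun_prop) _ _
      rw [e1, hs1]
      simp only [hw]
      rw [hS x hx]
      simp only [hs0]
      ring
    have hc := gl_conv (c := 1 / ‖k‖) |k.im| hx (by positivity) (by positivity) hqc
      (fun t ht => gl_nsin' (k := k) ht) hr1
    rw [← hA] at hc
    rw [e]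
    have hb2 : ‖(1 / (2 * k ^ 2)) *
        (∫ t in (0:ℝ)..x, Complex.cos (k * ((2 * t - x : ℝ) : ℂ)) * (q t : ℂ))‖ ≤
        1 / (2 * ‖k‖ ^ 2) * (ε * Real.exp (|k.im| * x)) := by
      rw [norm_mul]
      have : ‖1 / (2 * k ^ 2)‖ = 1 / (2 * ‖k‖ ^ 2) := by simp
      rw [this]
      exact mul_le_mul_of_nonneg_left (h2 x hx) (by positivity)
    refine (norm_add_le _ _).trans ((add_le_add hc hb2).trans_eq ?_)
    rw [hη]; field_simp
  intro x hx
  set E := Real.exp (|k.im| * x) with hE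
  have hE0 : 0 < E := Real.exp_pos _
  -- parts for q
  have hparts := gl_parts hℓ hx
    (v := fun t : ℝ => -Complex.cos (k * ((2 * t - x : ℝ) : ℂ)) / (2 * k))
    (v' := fun t : ℝ => Complex.sin (k * ((2 * t - x : ℝ) : ℂ)))
    (fun t => ((gl_dcos k x t).neg.div_const (2 * k)).congr_deriv (by field_simp)) (by fun_prop)
    hqc hq' hq
  have hz1 : ((2 * x - x : ℝ) : ℂ) = x := by push_cast; ring
  have hz2 : k * ((2 * 0 - x : ℝ) : ℂ) = -(k * x) := by push_cast; ring
  rw [hz1, hz2, Complex.cos_neg] at hparts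
  have hv : (∫ t in (0:ℝ)..x, -Complex.cos (k * ((2 * t - x : ℝ) : ℂ)) / (2 * k) * (q' t : ℂ)) =
      -(1 / (2 * k)) * ∫ t in (0:ℝ)..x, Complex.cos (k * ((2 * t - x : ℝ) : ℂ)) * (q' t : ℂ) := by
    rw [← intervalIntegral.integral_const_mul]
    congr 1; ext t; field_simp
  rw [hv] at hparts
  -- three pieces
  have hT1 : ∫ t in (0:ℝ)..x, Complex.cos (k * ((x - t : ℝ) : ℂ)) * (q t : ℂ) * s0 t =
      (1 / (2 * k)) * (∫ t in (0:ℝ)..x, Complex.sin (k * ((2 * t - x : ℝ) : ℂ)) * (q t : ℂ))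
      + Complex.sin (k * x) / (2 * k) * Q x := by
    rw [← hQC, ← intervalIntegral.integral_const_mul, ← intervalIntegral.integral_const_mul,
      ← intervalIntegral.integral_add]
    · congr 1; ext t
      have := (gl_trig k x t).2.1
      calc _ = (Complex.cos (k * ((x - t : ℝ) : ℂ)) * Complex.sin (k * t)) * q t / k := by
            simp only [hs0]; field_simp
        _ = _ := by rw [this]; field_simp
    · exact Continuous.intervalIntegrable (by fun_prop) _ _
    · exact Continuous.intervalIntegrable (by fun_prop) _ _
  have hqQ : (∫ t in (0:ℝ)..x, ((q t * Q t : ℝ) : ℂ)) = (Q x : ℂ) ^ 2 / 2 := by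
    rw [intervalIntegral.integral_ofReal]
    have : ∫ t in (0:ℝ)..x, q t * Q t = Q x ^ 2 / 2 := by
      rw [intervalIntegral.integral_eq_sub_of_hasDerivAt (f := fun t => Q t ^ 2 / 2)
        (fun t _ => (((hQd t).pow 2).div_const 2).congr_deriv (by push_cast; ring))
        (Continuous.intervalIntegrable (by fun_prop) _ _), hQ0]
      ring
    rw [this]; push_cast; ring
  have hT2 : ∫ t in (0:ℝ)..x, Complex.cos (k * ((x - t : ℝ) : ℂ)) * (q t : ℂ) *
        (Complex.cos (k * t) / (2 * k ^ 2) * Q t) =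
      (1 / (4 * k ^ 2)) * (∫ t in (0:ℝ)..x, Complex.cos (k * ((2 * t - x : ℝ) : ℂ)) *
        ((q t * Q t : ℝ) : ℂ))
      + Complex.cos (k * x) / (4 * k ^ 2) * ((Q x : ℂ) ^ 2 / 2) := by
    rw [← hqQ, ← intervalIntegral.integral_const_mul, ← intervalIntegral.integral_const_mul,
      ← intervalIntegral.integral_add]
    · congr 1; ext t
      have := (gl_trig k x t).2.2
      calc _ = (Complex.cos (k * ((x - t : ℝ) : ℂ)) * Complex.cos (k * t)) * (q t * Q t)
              / (2 * k ^ 2) := by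
            field_simp
        _ = _ := by rw [this]; push_cast; field_simp; ring
    · exact Continuous.intervalIntegrable (by fun_prop) _ _
    · exact Continuous.intervalIntegrable (by fun_prop) _ _
  have hsplit : (∫ t in (0 : ℝ)..x, Complex.cos (k * ((x - t : ℝ) : ℂ)) * (q t : ℂ) * S t) =
      (∫ t in (0:ℝ)..x, Complex.cos (k * ((x - t : ℝ) : ℂ)) * (q t : ℂ) * s0 t)
      - (∫ t in (0:ℝ)..x, Complex.cos (k * ((x - t : ℝ) : ℂ)) * (q t : ℂ) *
        (Complex.cos (k * t) / (2 * k ^ 2) * Q t))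
      + ∫ t in (0:ℝ)..x, Complex.cos (k * ((x - t : ℝ) : ℂ)) * (q t : ℂ) * w t := by
    rw [← intervalIntegral.integral_sub, ← intervalIntegral.integral_add]
    · congr 1; ext t; simp only [hw]; ring
    · exact Continuous.intervalIntegrable (by fun_prop) _ _
    · exact Continuous.intervalIntegrable (by fun_prop) _ _
    · exact Continuous.intervalIntegrable (by fun_prop) _ _
    · exact Continuous.intervalIntegrable (by fun_prop) _ _
  have hW := gl_conv (c := 1) |k.im| hx zero_le_one hη0 hqc
      (fun t ht => gl_ncos' (k := k) ht) hwb
  rw [← hA, ← hE] at hW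
  have hnk : ‖1 / (4 * k ^ 2)‖ = 1 / (4 * ‖k‖ ^ 2) := by simp
  have b1 : ‖1 / (4 * k ^ 2) * ∫ t in (0:ℝ)..x, Complex.cos (k * ((2 * t - x : ℝ) : ℂ)) *
      (q' t : ℂ)‖ ≤ 1 / (4 * ‖k‖ ^ 2) * (ε * E) := by
    rw [norm_mul, hnk]; exact mul_le_mul_of_nonneg_left (h1 x hx) (by positivity)
  have b3 : ‖1 / (4 * k ^ 2) * ∫ t in (0:ℝ)..x, Complex.cos (k * ((2 * t - x : ℝ) : ℂ)) *
      ((q t * Q t : ℝ) : ℂ)‖ ≤ 1 / (4 * ‖k‖ ^ 2) * (ε * E) := by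
    rw [norm_mul, hnk]; exact mul_le_mul_of_nonneg_left (h3 x hx) (by positivity)
  rw [hsplit, hT1, hT2, hparts]
  generalize (∫ t in (0:ℝ)..x, Complex.cos (k * ((2 * t - x : ℝ) : ℂ)) * (q' t : ℂ)) = I1 at *
  generalize (∫ t in (0:ℝ)..x, Complex.cos (k * ((2 * t - x : ℝ) : ℂ)) *
    ((q t * Q t : ℝ) : ℂ)) = I3 at *
  generalize (∫ t in (0:ℝ)..x, Complex.cos (k * ((x - t : ℝ) : ℂ)) * (q t : ℂ) * w t) = I4 at *
  have key : ∀ a b c d e : ℂ, 1 / (2 * k) * (-a / (2 * k) * b - -a / (2 * k) * c - -(1 / (2 * k)) * I1)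
      + d / (2 * k) * e - (1 / (4 * k ^ 2) * I3 + a / (4 * k ^ 2) * (e ^ 2 / 2)) + I4
      - d / k * (1 / 2 * e) + a / k ^ 2 * (1 / 4 * (b - c) + 1 / 8 * e ^ 2)
      = 1 / (4 * k ^ 2) * I1 - 1 / (4 * k ^ 2) * I3 + I4 := by
    intro a b c d e
    field_simp
    ring
  rw [key]
  refine (norm_add_le _ _).trans ((add_le_add ((norm_sub_le _ _).trans (add_le_add b1 b3)) hW).trans_eq ?_)
  rw [hη]; field_simp; ring

theorem gelfand_levitan_s_deriv_asymptotics
    (ℓ : ℝ) (hℓ : 0 < ℓ) (q q' : ℝ → ℝ)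
    (hq' : IntervalIntegrable q' volume 0 ℓ)
    (hq : ∀ x ∈ Set.Icc (0 : ℝ) ℓ, q x = q 0 + ∫ t in (0 : ℝ)..x, q' t)
    (s sderiv : ℂ → ℝ → ℂ)
    (hscont : ∀ k : ℂ, k ≠ 0 → ContinuousOn (s k) (Set.Icc 0 ℓ))
    (hs : ∀ k : ℂ, k ≠ 0 → ∀ x ∈ Set.Icc (0 : ℝ) ℓ,
      s k x = Complex.sin (k * x) / k +
        ∫ t in (0 : ℝ)..x, (Complex.sin (k * ((x : ℂ) - t)) / k) * (q t : ℂ) * s k t)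
    (hsderiv : ∀ k : ℂ, k ≠ 0 → ∀ x ∈ Set.Icc (0 : ℝ) ℓ,
      sderiv k x = Complex.cos (k * x) +
        ∫ t in (0 : ℝ)..x, Complex.cos (k * ((x : ℂ) - t)) * (q t : ℂ) * s k t) :
    ∀ ε > 0, ∃ K > 0, ∀ k : ℂ, K ≤ ‖k‖ → ∀ x ∈ Set.Icc (0 : ℝ) ℓ,
      ‖sderiv k x - Complex.cos (k * x)
          - (Complex.sin (k * x) / k) * ((1 / 2 : ℂ) * ∫ t in (0 : ℝ)..x, (q t : ℂ))
          + (Complex.cos (k * x) / k ^ 2) *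
              ((1 / 4 : ℂ) * ((q x : ℂ) - (q 0 : ℂ))
                + (1 / 8 : ℂ) * (∫ t in (0 : ℝ)..x, (q t : ℂ)) ^ 2)‖
        ≤ ε * Real.exp (|k.im| * x) / ‖k‖ ^ 2 := by
  intro ε hε
  have h00 : (0:ℝ) ∈ Set.Icc 0 ℓ := ⟨le_rfl, hℓ.le⟩
  have hqon : ContinuousOn q (Set.Icc 0 ℓ) := by
    have h : ContinuousOn (fun x => q 0 + ∫ t in (0 : ℝ)..x, q' t) (Set.Icc 0 ℓ) := by
      have := intervalIntegral.continuousOn_primitive_interval (a := 0) (b := ℓ) (f := q')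
        (μ := volume) (by
          rw [Set.uIcc_of_le hℓ.le]
          exact (intervalIntegrable_iff_integrableOn_Icc_of_le hℓ.le).1 hq')
      rw [Set.uIcc_of_le hℓ.le] at this
      exact continuousOn_const.add this
    exact h.congr hq
  -- continuous extension
  set q1 : ℝ → ℝ := Set.IccExtend hℓ.le ((Set.Icc 0 ℓ).restrict q) with hq1
  have hq1c : Continuous q1 := (continuousOn_iff_continuous_restrict.1 hqon).Icc_extend'
  have hq1e : ∀ t ∈ Set.Icc 0 ℓ, q1 t = q t := fun t ht => by
    rw [hq1, Set.IccExtend_of_mem _ _ ht]; rfl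
  have hq1' : ∀ x ∈ Set.Icc (0 : ℝ) ℓ, q1 x = q1 0 + ∫ t in (0 : ℝ)..x, q' t := by
    intro x hx; rw [hq1e x hx, hq1e 0 h00]; exact hq x hx
  set A := ∫ t in (0:ℝ)..ℓ, |q1 t| with hA
  have hA0 : 0 ≤ A := intervalIntegral.integral_nonneg hℓ.le fun _ _ => abs_nonneg _
  set Q : ℝ → ℝ := fun x => ∫ t in (0:ℝ)..x, q1 t with hQ
  have hQc : Continuous Q := intervalIntegral.continuous_primitive
    (fun a b => hq1c.intervalIntegrable a b) 0
  set ε1 := ε / (1 + A) with hε1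
  have hε1p : 0 < ε1 := by positivity
  obtain ⟨K1, hK1, H1⟩ := gl_RL hℓ hq' hε1p
  obtain ⟨K2, hK2, H2⟩ := gl_RL hℓ (hq1c.intervalIntegrable 0 ℓ) hε1p
  obtain ⟨K3, hK3, H3⟩ := gl_RL hℓ (g := fun t => q1 t * Q t)
    ((hq1c.mul hQc).intervalIntegrable 0 ℓ) hε1p
  refine ⟨K1 + K2 + K3 + 2 * A + 4 * A ^ 3 / ε, by positivity, fun k hk x hx => ?_⟩
  have hp : 0 ≤ 4 * A ^ 3 / ε := by positivity
  have hk0 : 0 < ‖k‖ := by linarith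
  have hkne : k ≠ 0 := norm_pos_iff.1 hk0
  set S : ℝ → ℂ := Set.IccExtend hℓ.le ((Set.Icc 0 ℓ).restrict (s k)) with hSd
  have hSc : Continuous S := (continuousOn_iff_continuous_restrict.1 (hscont k hkne)).Icc_extend'
  have hSe : ∀ t ∈ Set.Icc 0 ℓ, S t = s k t := fun t ht => by
    rw [hSd, Set.IccExtend_of_mem _ _ ht]; rfl
  have hcongr : ∀ f g : ℝ → ℂ, ∀ y ∈ Set.Icc 0 ℓ, (∀ t ∈ Set.Icc 0 ℓ, f t = g t) →
      ∫ t in (0:ℝ)..y, f t = ∫ t in (0:ℝ)..y, g t := by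
    intro f g y hy h
    apply intervalIntegral.integral_congr
    intro t ht
    rw [Set.uIcc_of_le hy.1] at ht
    exact h t ⟨ht.1, ht.2.trans hy.2⟩
  have main := gl_core hℓ hq1c hq' hq1' hk0 hSc (fun y hy => by
    rw [hSe y hy, hs k hkne y hy]
    congr 1
    apply hcongr _ _ y hy
    intro t ht
    rw [hSe t ht, hq1e t ht]; push_cast; rfl) hA (by linarith) (Q := Q) (fun _ => rfl) hε1p
    (H1 k (by linarith)) (H2 k (by linarith)) (H3 k (by linarith)) x hx
  have e1 : (∫ t in (0 : ℝ)..x, (q t : ℂ)) = (Q x : ℂ) := by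
    rw [hQ, ← intervalIntegral.integral_ofReal]
    exact hcongr _ _ x hx fun t ht => by rw [hq1e t ht]
  have e2 : sderiv k x - Complex.cos (k * x) =
      ∫ t in (0 : ℝ)..x, Complex.cos (k * ((x - t : ℝ) : ℂ)) * (q1 t : ℂ) * S t := by
    rw [hsderiv k hkne x hx, add_sub_cancel_left]
    apply hcongr _ _ x hx
    intro t ht
    rw [hSe t ht, hq1e t ht]; push_cast; rfl
  rw [e1, e2, ← hq1e x hx, ← hq1e 0 h00]
  refine main.trans ?_
  apply div_le_div_of_nonneg_right _ (by positivity)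
  apply mul_le_mul_of_nonneg_right _ (Real.exp_pos _).le
  have c1 : A * (2 * A ^ 2 / ‖k‖) ≤ ε / 2 := by
    have : 4 * A ^ 3 / ε ≤ ‖k‖ := by linarith
    rw [div_le_iff₀ hε] at this
    rw [mul_div_assoc', div_le_iff₀ hk0]
    linarith
  have c2 : ε1 * (1 + A) = ε := by rw [hε1]; field_simp
  linarith
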